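/- arXiv:1007.3436 — 2 statements merged into one kernel-verified Lean document; each statement's English description precedes it below -/
import Mathlib

section
/- For every integer n ≥ 2, ζ(n) = (2^n / ((2^n − 1) · (n − 1)!)) · ∫_0^∞ (ln(coth(x)))^{n−1} dx. -/
open MeasureTheory Real

/-- The hyperbolic cotangent, `coth x = cosh x / sinh x`. -/
noncomputable def coth (x : ℝ) : ℝ := Real.cosh x / Real.sinh x

/-!
The function `u = log (coth x)` is a decreasing bijection of `(0, ∞)` satisfying the autonomous
equation `u' = -2 sinh u`. Substituting it turns the integral into the Mellin transform of
`1 / (2 sinh u) = ∑ₖ exp (-(2k + 1) u)`, hence into `Γ(s) ∑ₖ (2k + 1)⁻ˢ = Γ(s) (1 - 2⁻ˢ) ζ(s)`.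
-/

lemma coth_eq_inv_tanh (x : ℝ) : coth x = (tanh x)⁻¹ := by
  rw [coth, tanh_eq_sinh_div_cosh, inv_div]

lemma coth_pos {x : ℝ} (hx : 0 < x) : 0 < coth x :=
  div_pos (cosh_pos x) (sinh_pos_iff.mpr hx)

lemma one_lt_coth {x : ℝ} (hx : 0 < x) : 1 < coth x :=
  (one_lt_div (sinh_pos_iff.mpr hx)).mpr (sinh_lt_cosh x)

lemma log_coth_pos {x : ℝ} (hx : 0 < x) : 0 < log (coth x) :=
  log_pos (one_lt_coth hx)

lemma sinh_log_coth {x : ℝ} (hx : 0 < x) :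
    sinh (log (coth x)) = (2 * (sinh x * cosh x))⁻¹ := by
  have hsinh : sinh x ≠ 0 := (sinh_pos_iff.mpr hx).ne'
  have hcosh : cosh x ≠ 0 := (cosh_pos x).ne'
  rw [sinh_log (coth_pos hx), coth, inv_div]
  field_simp
  rw [cosh_sq_sub_sinh_sq]

lemma exp_neg_log_coth {x : ℝ} (hx : 0 < x) : exp (-log (coth x)) = tanh x := by
  rw [exp_neg, exp_log (coth_pos hx), coth_eq_inv_tanh, inv_inv]

lemma exp_neg_mem_Ioo {u : ℝ} (hu : 0 < u) : exp (-u) ∈ Set.Ioo 0 1 :=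
  ⟨exp_pos _, exp_lt_one_iff.mpr (neg_lt_zero.mpr hu)⟩

lemma log_coth_artanh_exp_neg {u : ℝ} (hu : 0 < u) : log (coth (artanh (exp (-u)))) = u := by
  have hmem : exp (-u) ∈ Set.Ioo (-1) 1 :=
    Set.Ioo_subset_Ioo_left (by norm_num) (exp_neg_mem_Ioo hu)
  rw [coth_eq_inv_tanh, tanh_artanh hmem, log_inv, log_exp, neg_neg]

lemma bijOn_log_coth : Set.BijOn (fun x ↦ log (coth x)) (Set.Ioi 0) (Set.Ioi 0) := by
  refine Set.InvOn.bijOn (f' := fun u ↦ artanh (exp (-u))) ⟨fun x hx ↦ ?_, fun u hu ↦ ?_⟩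
    (fun x hx ↦ log_coth_pos hx) (fun u hu ↦ artanh_pos (exp_neg_mem_Ioo hu))
  · simp only [exp_neg_log_coth hx, artanh_tanh]
  · exact log_coth_artanh_exp_neg hu

lemma hasDerivAt_log_coth {x : ℝ} (hx : 0 < x) :
    HasDerivAt (fun y ↦ log (coth y)) (-(2 * sinh (log (coth x)))) x := by
  have hsinh : sinh x ≠ 0 := (sinh_pos_iff.mpr hx).ne'
  have hcosh : cosh x ≠ 0 := (cosh_pos x).ne'
  refine (((hasDerivAt_cosh x).div (hasDerivAt_sinh x) hsinh).log
    (coth_pos hx).ne').congr_deriv ?_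
  rw [sinh_log_coth hx]
  simp only [Pi.div_apply]
  field_simp
  linear_combination -cosh_sq_sub_sinh_sq x

theorem integral_comp_log_coth {E : Type*} [NormedAddCommGroup E] [NormedSpace ℝ E] (f : ℝ → E) :
    ∫ x in Set.Ioi 0, f (log (coth x)) = ∫ u in Set.Ioi 0, (2 * sinh u)⁻¹ • f u := by
  have hsubst := integral_image_eq_integral_abs_deriv_smul measurableSet_Ioi
    (fun x hx ↦ (hasDerivAt_log_coth hx).hasDerivWithinAt) bijOn_log_coth.injOn
    (fun u ↦ (2 * sinh u)⁻¹ • f u)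
  rw [bijOn_log_coth.image_eq] at hsubst
  rw [hsubst]
  refine setIntegral_congr_fun measurableSet_Ioi fun x hx ↦ ?_
  have hjac : 0 < 2 * sinh (log (coth x)) :=
    mul_pos two_pos (sinh_pos_iff.mpr (log_coth_pos hx))
  simp only [abs_neg, abs_of_pos hjac, smul_inv_smul₀ hjac.ne']

lemma hasSum_exp_neg_odd_mul {u : ℝ} (hu : 0 < u) :
    HasSum (fun k : ℕ ↦ exp (-(2 * k + 1) * u)) (2 * sinh u)⁻¹ := by
  have hgeom := (hasSum_geometric_of_lt_one (exp_pos (-(2 * u))).le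
    (exp_neg_mem_Ioo (by positivity)).2).mul_left (exp (-u))
  have hsinh : 2 * sinh u = exp u * (1 - exp (-(2 * u))) := by
    rw [sinh_eq, mul_sub, ← exp_add]
    ring_nf
  rw [hsinh, mul_inv, ← exp_neg]
  have hterm (k : ℕ) : exp (-(2 * k + 1) * u) = exp (-u) * exp (-(2 * u)) ^ k := by
    rw [← exp_nat_mul, ← exp_add]
    ring_nf
  simpa only [hterm] using hgeom

lemma injective_two_mul_add_one : Function.Injective fun k : ℕ ↦ 2 * k + 1 :=
  (add_left_injective 1).comp (mul_right_injective₀ two_ne_zero)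

lemma tsum_one_div_odd_cpow {s : ℂ} (hs : 1 < s.re) :
    ∑' k : ℕ, 1 / (2 * k + 1 : ℂ) ^ s = (1 - 1 / 2 ^ s) * riemannZeta s := by
  have hsummable := Complex.summable_one_div_nat_cpow.mpr hs
  have hsplit := tsum_even_add_odd (f := fun k : ℕ ↦ 1 / (k : ℂ) ^ s)
    (hsummable.comp_injective (mul_right_injective₀ two_ne_zero))
    (hsummable.comp_injective injective_two_mul_add_one)
  have heven (k : ℕ) : 1 / ((2 * k : ℕ) : ℂ) ^ s = 1 / 2 ^ s * (1 / (k : ℂ) ^ s) := by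
    rw [Nat.cast_mul, Complex.natCast_mul_natCast_cpow, Nat.cast_ofNat, one_div_mul_one_div]
  simp only [heven, tsum_mul_left, ← zeta_eq_tsum_one_div_nat_cpow hs] at hsplit
  push_cast at hsplit
  linear_combination hsplit

theorem mellin_inv_two_mul_sinh {s : ℂ} (hs : 1 < s.re) :
    mellin (fun u ↦ (2 * Complex.sinh u)⁻¹) s =
      Complex.Gamma s * ((1 - 1 / 2 ^ s) * riemannZeta s) := by
  have hsummable : Summable fun k : ℕ ↦ ‖(1 : ℂ)‖ / (2 * k + 1 : ℝ) ^ s.re := by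
    simpa [Function.comp_def] using
      (Real.summable_one_div_nat_rpow.mpr hs).comp_injective injective_two_mul_add_one
  have hmellin := hasSum_mellin (fun _ ↦ .inr (by positivity)) (one_pos.trans hs)
    (fun u hu ↦ by
      simpa only [one_mul] using! Complex.hasSum_ofReal.mpr (hasSum_exp_neg_odd_mul hu)) hsummable
  push_cast at hmellin
  rw [← hmellin.tsum_eq, ← tsum_one_div_odd_cpow hs, ← tsum_mul_left]
  simp only [mul_div_assoc]

lemma two_cpow_ne_one {s : ℂ} (hs : 0 < s.re) : (2 : ℂ) ^ s ≠ 1 := by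
  intro h
  have hnorm := Complex.norm_natCast_cpow_of_pos two_pos s
  rw [Nat.cast_ofNat, h, norm_one] at hnorm
  exact (one_lt_rpow one_lt_two hs).ne hnorm

theorem zeta_eq_const_mul_integral_log_coth_pow_general {s : ℂ} (hs : 1 < s.re) :
    riemannZeta s = 2 ^ s / ((2 ^ s - 1) * Complex.Gamma s) *
      ∫ x in Set.Ioi (0 : ℝ), (log (coth x) : ℂ) ^ (s - 1) := by
  have hintegral : ∫ x in Set.Ioi (0 : ℝ), (log (coth x) : ℂ) ^ (s - 1) =
      mellin (fun u ↦ (2 * Complex.sinh u)⁻¹) s := by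
    simp only [integral_comp_log_coth fun u ↦ (u : ℂ) ^ (s - 1), mellin, Complex.real_smul,
      smul_eq_mul, mul_comm, Complex.ofReal_inv, Complex.ofReal_mul, Complex.ofReal_ofNat,
      Complex.ofReal_sinh]
  have htwo : (2 : ℂ) ^ s ≠ 0 := by simp
  have htwo_sub : (2 : ℂ) ^ s - 1 ≠ 0 := sub_ne_zero.mpr (two_cpow_ne_one (one_pos.trans hs))
  have hGamma : Complex.Gamma s ≠ 0 := Complex.Gamma_ne_zero_of_re_pos (one_pos.trans hs)
  rw [hintegral, mellin_inv_two_mul_sinh hs]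
  field_simp

theorem zeta_eq_const_mul_integral_log_coth_pow (n : ℕ) (hn : 2 ≤ n) :
    (∑' k : ℕ, (1 : ℝ) / (k + 1) ^ n) =
      2 ^ n / ((2 ^ n - 1) * (Nat.factorial (n - 1) : ℝ)) *
        ∫ x in Set.Ioi (0 : ℝ), Real.log (coth x) ^ (n - 1) := by
  have hs : 1 < (n : ℂ).re := by rwa [Complex.natCast_re, Nat.one_lt_cast]
  have hpred : (n : ℂ) - 1 = (n - 1 : ℕ) := (Nat.cast_pred (by lia)).symm
  have hGamma : Complex.Gamma n = (n - 1).factorial := by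
    rw [← Complex.Gamma_nat_eq_factorial, ← hpred, sub_add_cancel]
  apply Complex.ofReal_injective
  simpa [Complex.ofReal_tsum, zeta_eq_tsum_one_div_nat_add_one_cpow hs, hpred, hGamma,
    ← integral_complex_ofReal] using zeta_eq_const_mul_integral_log_coth_pow_general hs
end

section
/- The double integral ∫_0^1 ∫_0^1 1/(1 − x²y²) dx dy equals π²/8. -/
open MeasureTheory Real

/-!
Expanding the integrand as a geometric series in `x²y²` and integrating term by term, the `n`-th
term contributes `(∫₀¹ x²ⁿ dx)² = 1 / (2n + 1)²`. The sum of the inverse odd squares is what remains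
of `∑ 1 / n² = π² / 6` after removing the even terms, which make up a quarter of it.
-/

theorem hasSum_odd_of_apply_two_mul {R : Type*} [Ring R] [UniformSpace R] [IsUniformAddGroup R]
    [IsTopologicalRing R] [CompleteSpace R] [T2Space R] {f : ℕ → R} {a c : R} (hf : HasSum f a)
    (hfc : ∀ n, f (2 * n) = c * f n) :
    HasSum (fun n ↦ f (2 * n + 1)) ((1 - c) * a) := by
  have even : HasSum (fun n ↦ f (2 * n)) (c * a) := by
    simpa only [hfc] using hf.mul_left c
  have odd_summable : Summable fun n ↦ f (2 * n + 1) :=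
    hf.summable.comp_injective (i := fun n ↦ 2 * n + 1) fun m n h ↦ by lia
  have split : c * a + ∑' n, f (2 * n + 1) = a := (even.even_add_odd odd_summable.hasSum).unique hf
  have odd_sum : ∑' n, f (2 * n + 1) = (1 - c) * a := by
    rw [sub_mul, one_mul, eq_sub_of_add_eq' split]
  exact odd_sum ▸ odd_summable.hasSum

theorem hasSum_inv_odd_sq : HasSum (fun n : ℕ ↦ ((2 * n + 1 : ℝ) ^ 2)⁻¹) (π ^ 2 / 8) := by
  have h := hasSum_odd_of_apply_two_mul (c := 1 / 4) hasSum_zeta_two fun n ↦ by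
    push_cast
    ring
  rw [show (1 - 1 / 4) * (π ^ 2 / 6) = π ^ 2 / 8 by ring] at h
  simpa only [one_div, Nat.cast_add, Nat.cast_mul, Nat.cast_ofNat, Nat.cast_one] using h

theorem summable_inv_mul_add_one_mul {a b : ℕ} (ha : a ≠ 0) (hb : b ≠ 0) :
    Summable fun n : ℕ ↦ ((a * n + 1 : ℝ) * (b * n + 1))⁻¹ := by
  have shifted : Summable fun n : ℕ ↦ (((n + 1 : ℕ) : ℝ) ^ 2)⁻¹ :=
    (summable_nat_add_iff 1).2 (Real.summable_nat_pow_inv.2 one_lt_two)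
  refine .of_nonneg_of_le (fun n ↦ by positivity) (fun n ↦ ?_) shifted
  have le_mul {k : ℕ} (hk : k ≠ 0) : (n : ℝ) ≤ k * n := by
    exact_mod_cast Nat.le_mul_of_pos_left n (Nat.pos_of_ne_zero hk)
  rw [sq, Nat.cast_succ]
  gcongr
  exacts [le_mul ha, le_mul hb]

theorem hasSum_integral_pow_of_norm_lt_one {α 𝕜 : Type*} [MeasurableSpace α] {μ : Measure α}
    [IsFiniteMeasure μ] [NormedDivisionRing 𝕜] [NormedSpace ℝ 𝕜] [CompleteSpace 𝕜] {f : α → 𝕜}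
    (hf : AEStronglyMeasurable f μ) (hf_lt : ∀ᵐ x ∂μ, ‖f x‖ < 1)
    (hsum : Summable fun n : ℕ ↦ ∫ x, ‖f x ^ n‖ ∂μ) :
    HasSum (fun n : ℕ ↦ ∫ x, f x ^ n ∂μ) (∫ x, (1 - f x)⁻¹ ∂μ) := by
  have integrable_pow (n : ℕ) : Integrable (fun x ↦ f x ^ n) μ := by
    refine .of_bound (hf.pow n) 1 ?_
    filter_upwards [hf_lt] with x hx
    rw [norm_pow]
    exact pow_le_one₀ (norm_nonneg _) hx.le
  have geometric : ∫ x, ∑' n : ℕ, f x ^ n ∂μ = ∫ x, (1 - f x)⁻¹ ∂μ := by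
    refine integral_congr_ae ?_
    filter_upwards [hf_lt] with x hx
    exact tsum_geometric_of_norm_lt_one hx
  exact geometric ▸ hasSum_integral_of_summable_integral_norm integrable_pow hsum

theorem setIntegral_Ioo_zero_one_pow (n : ℕ) :
    ∫ x in Set.Ioo (0 : ℝ) 1, x ^ n = ((n : ℝ) + 1)⁻¹ := by
  rw [← integral_Ioc_eq_integral_Ioo, ← intervalIntegral.integral_of_le zero_le_one, integral_pow]
  simp

theorem setIntegral_unitSquare_pow_mul_pow (m n : ℕ) :
    ∫ p : ℝ × ℝ in Set.Ioo (0 : ℝ) 1 ×ˢ Set.Ioo (0 : ℝ) 1, p.1 ^ m * p.2 ^ n =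
      (((m : ℝ) + 1) * (n + 1))⁻¹ := by
  rw [Measure.volume_eq_prod, setIntegral_prod_mul (fun x : ℝ ↦ x ^ m) (fun y : ℝ ↦ y ^ n),
    setIntegral_Ioo_zero_one_pow, setIntegral_Ioo_zero_one_pow, mul_inv]

theorem hasSum_setIntegral_unitSquare_inv_one_sub_pow_mul_pow {a b : ℕ} (ha : a ≠ 0)
    (hb : b ≠ 0) :
    HasSum (fun n : ℕ ↦ ((a * n + 1 : ℝ) * (b * n + 1))⁻¹)
      (∫ p : ℝ × ℝ in Set.Ioo (0 : ℝ) 1 ×ˢ Set.Ioo (0 : ℝ) 1, (1 - p.1 ^ a * p.2 ^ b)⁻¹) := by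
  have square_measurable : MeasurableSet (Set.Ioo (0 : ℝ) 1 ×ˢ Set.Ioo (0 : ℝ) 1) :=
    measurableSet_Ioo.prod measurableSet_Ioo
  have square_finite : IsFiniteMeasure
      (volume.restrict (Set.Ioo (0 : ℝ) 1 ×ˢ Set.Ioo (0 : ℝ) 1)) :=
    isFiniteMeasure_restrict.2 (Bornology.IsBounded.prod (Metric.isBounded_Ioo 0 1)
      (Metric.isBounded_Ioo 0 1)).measure_lt_top.ne
  have integral_term (n : ℕ) :
      ∫ p : ℝ × ℝ in Set.Ioo (0 : ℝ) 1 ×ˢ Set.Ioo (0 : ℝ) 1, (p.1 ^ a * p.2 ^ b) ^ n =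
        ((a * n + 1 : ℝ) * (b * n + 1))⁻¹ := by
    simpa only [mul_pow, ← pow_mul, Nat.cast_mul] using
      setIntegral_unitSquare_pow_mul_pow (a * n) (b * n)
  have integral_norm_term (n : ℕ) :
      ∫ p : ℝ × ℝ in Set.Ioo (0 : ℝ) 1 ×ˢ Set.Ioo (0 : ℝ) 1, ‖(p.1 ^ a * p.2 ^ b) ^ n‖ =
        ((a * n + 1 : ℝ) * (b * n + 1))⁻¹ := by
    rw [← integral_term n]
    refine setIntegral_congr_fun square_measurable fun p ⟨⟨hx, _⟩, ⟨hy, _⟩⟩ ↦ ?_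
    exact norm_of_nonneg (by positivity)
  have norm_lt_one : ∀ᵐ p : ℝ × ℝ ∂volume.restrict (Set.Ioo (0 : ℝ) 1 ×ˢ Set.Ioo (0 : ℝ) 1),
      ‖p.1 ^ a * p.2 ^ b‖ < 1 := by
    filter_upwards [ae_restrict_mem square_measurable] with p ⟨⟨hx, hx'⟩, ⟨hy, hy'⟩⟩
    rw [norm_of_nonneg (by positivity)]
    exact mul_lt_one_of_nonneg_of_lt_one_left (by positivity) (pow_lt_one₀ hx.le hx' ha)
      (pow_le_one₀ hy.le hy'.le)
  simpa only [integral_term] using hasSum_integral_pow_of_norm_lt_one (by fun_prop) norm_lt_one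
    (by simpa only [integral_norm_term] using summable_inv_mul_add_one_mul ha hb)

theorem double_integral_one_sub_sq_eq_pi_sq_div_eight :
    (∫ p : ℝ × ℝ in Set.Ioo (0 : ℝ) 1 ×ˢ Set.Ioo (0 : ℝ) 1,
        (1 - p.1 ^ 2 * p.2 ^ 2)⁻¹) = π ^ 2 / 8 := by
  have series := hasSum_setIntegral_unitSquare_inv_one_sub_pow_mul_pow two_ne_zero two_ne_zero
  simp only [Nat.cast_ofNat, ← sq] at series
  exact series.unique hasSum_inv_odd_sq
end
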